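/- arXiv:2511.05840 — 7 statements merged into one kernel-verified Lean document; each statement's English description precedes it below -/
import Mathlib

section
/- Let M be a set of Borel probability measures on ℝ, S:ℝ²→ℝ a loss function, and (ρ,φ):M→ℝ×I(ℝ) a Bayes pair with loss function S. Suppose φ has an identification function v:ℝ²→ℝ. Then for every function h:ℝ²→ℝ that is not constantly 0, the map (x,r,z) ↦ (v(x,z), h(r,z)(S(x,z)−r)) is an identification function for (ρ,φ): for all F∈M, if r=ρ(F) and z∈φ(F), then ∫v(x,z)dF(x)=0 and ∫h(r,z)(S(x,z)−r)dF(x)=0. If moreover v is a strict identification function for φ and h(r,z)≠0 for all (r,z)∈ℝ², then this map is a strict identification function for (ρ,φ): conversely, ∫v(x,z)dF(x)=0 and ∫h(r,z)(S(x,z)−r)dF(x)=0 imply z∈φ(F) and r=ρ(F). -/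
open MeasureTheory

/-!
For a probability measure `F`, the expectation of `h(r,z) (S(x,z) - r)` is
`h(r,z) (E_F S(·,z) - r)`. For `z ∈ φ F` this equals `h(r,z) (ρ F - r)`, which vanishes at
`r = ρ F`, and only there if `h(r,z) ≠ 0`.
-/

section

variable {X E : Type*} [MeasurableSpace X] [NormedAddCommGroup E] [NormedSpace ℝ E]
  [CompleteSpace E]

theorem integral_smul_sub_const_eq_zero_iff {μ : Measure X} [IsProbabilityMeasure μ] {f : X → E}
    (hf : Integrable f μ) (c : ℝ) (r : E) :
    ∫ x, c • (f x - r) ∂μ = 0 ↔ c = 0 ∨ r = ∫ x, f x ∂μ := by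
  rw [integral_smul, integral_sub hf (integrable_const r), integral_const, probReal_univ, one_smul,
    smul_eq_zero, sub_eq_zero, eq_comm (a := r)]

theorem stmt0_general {A G : Type*} [NormedAddCommGroup G] [NormedSpace ℝ G]
    (M : Set (Measure X)) (hprob : ∀ F ∈ M, IsProbabilityMeasure F)
    (S : X → A → E) (ρ : Measure X → E) (φ : Measure X → Set A)
    (hSint : ∀ F ∈ M, ∀ a ∈ φ F, Integrable (fun x => S x a) F)
    (hρ : ∀ F ∈ M, ∀ a ∈ φ F, ρ F = ∫ x, S x a ∂F)
    (v : X → A → G) (hv : ∀ F ∈ M, ∀ z ∈ φ F, ∫ x, v x z ∂F = 0) :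
    (∀ h : E → A → ℝ, ∀ F ∈ M, ∀ r z, r = ρ F → z ∈ φ F →
      ∫ x, v x z ∂F = 0 ∧ ∫ x, h r z • (S x z - r) ∂F = 0) ∧
    ((∀ F ∈ M, ∀ z, ∫ x, v x z ∂F = 0 → z ∈ φ F) →
      ∀ h : E → A → ℝ, (∀ r z, h r z ≠ 0) → ∀ F ∈ M, ∀ r z,
        ∫ x, v x z ∂F = 0 → ∫ x, h r z • (S x z - r) ∂F = 0 → z ∈ φ F ∧ r = ρ F) := by
  have integral_eq_zero_iff (h : E → A → ℝ) {F : Measure X} (hF : F ∈ M) (r : E) {z : A}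
      (hz : z ∈ φ F) : ∫ x, h r z • (S x z - r) ∂F = 0 ↔ h r z = 0 ∨ r = ρ F := by
    have := hprob F hF
    rw [integral_smul_sub_const_eq_zero_iff (hSint F hF z hz), hρ F hF z hz]
  constructor
  · intro h F hF r z hr hz
    exact ⟨hv F hF z hz, (integral_eq_zero_iff h hF r hz).2 (.inr hr)⟩
  · intro hv_strict h h_ne F hF r z hvz hSz
    have hz : z ∈ φ F := hv_strict F hF z hvz
    exact ⟨hz, ((integral_eq_zero_iff h hF r hz).1 hSz).resolve_left (h_ne r z)⟩

end

/-- A Bayes pair `(ρ, φ)` with loss function `S`, where `φ` has an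
identification function `v`, admits the identification function
`(x, r, z) ↦ (v(x,z), h(r,z) * (S(x,z) − r))` for every `h` not constantly zero;
if moreover `v` is strict and `h` never vanishes, this identification function is strict. -/
theorem stmt0
    (M : Set (Measure ℝ)) (hprob : ∀ F ∈ M, IsProbabilityMeasure F)
    (S : ℝ → ℝ → ℝ) (ρ : Measure ℝ → ℝ) (φ : Measure ℝ → Set ℝ)
    -- `φ F` is a (nonempty) closed real interval
    (hInterval : ∀ F ∈ M, ∃ a b : ℝ, a ≤ b ∧ φ F = Set.Icc a b)
    -- all integrals of the loss are finite
    (hSint : ∀ F ∈ M, ∀ a : ℝ, Integrable (fun x => S x a) F)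
    -- Bayes pair: `φ F` is the argmin of the expected loss, `ρ F` its minimal value
    (hargmin : ∀ F ∈ M, ∀ a : ℝ, a ∈ φ F ↔ ∀ b : ℝ, ∫ x, S x a ∂F ≤ ∫ x, S x b ∂F)
    (hmin : ∀ F ∈ M, ∀ a ∈ φ F, ρ F = ∫ x, S x a ∂F)
    -- `v` is an identification function for `φ`
    (v : ℝ → ℝ → ℝ)
    (hv : ∀ F ∈ M, ∀ z ∈ φ F, (∫ x, v x z ∂F) = 0) :
    -- (1) identification function for `(ρ, φ)` for every `h` not constantly zero
    (∀ h : ℝ → ℝ → ℝ, (¬ ∀ r z : ℝ, h r z = 0) →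
      ∀ F ∈ M, ∀ r z : ℝ, r = ρ F → z ∈ φ F →
        (∫ x, v x z ∂F) = 0 ∧ (∫ x, h r z * (S x z - r) ∂F) = 0) ∧
    -- (2) strictness: if `v` is a strict identification function for `φ`
    -- and `h` never vanishes
    ((∀ F ∈ M, ∀ z : ℝ, (∫ x, v x z ∂F) = 0 → z ∈ φ F) →
      ∀ h : ℝ → ℝ → ℝ, (∀ r z : ℝ, h r z ≠ 0) →
      ∀ F ∈ M, ∀ r z : ℝ,
        (∫ x, v x z ∂F) = 0 → (∫ x, h r z * (S x z - r) ∂F) = 0 →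
        z ∈ φ F ∧ r = ρ F) := by
  obtain ⟨identifies, strict⟩ :=
    stmt0_general M hprob S ρ φ (fun F hF a _ => hSint F hF a) hmin v hv
  exact ⟨fun h _ => identifies h, strict⟩
end

section
/- In the setting of the preceding identification-function construction (M supported in 𝒦⊆ℝ, identification function (v,V) for ψ=(ρ,φ), and inf{V(x,a,b) : x∈𝒦, (a,b)∈ψ(M)} ≥ −1), suppose in addition that a ↦ V(x,a,b) is decreasing for every fixed x∈𝒦 and b. Then for every random variable L with law F_L∈M and every (r,z)∈ψ(M) with r ≥ ρ(F_L) and z∈φ(F_L), one has E[1+V(L,r,z)] ≤ 1; that is, E = 1+V(L,r,z) is a precise e-variable for the one-sided hypothesis H(ψ): r ≥ ρ(F_L) and z∈φ(F_L), as F_L ranges over M. -/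
open MeasureTheory

section Integral

variable {Ω : Type*} [MeasurableSpace Ω] {μ : Measure Ω}

lemma integral_le_integral_of_ae_antitoneOn {A : Type*} [Preorder A] {W : Ω → A → ℝ} {S : Set A}
    {s r : A} (hanti : ∀ᵐ x ∂μ, AntitoneOn (W x) S) (hs : s ∈ S) (hr : r ∈ S) (hsr : s ≤ r)
    (hints : Integrable (fun x => W x s) μ) (hintr : Integrable (fun x => W x r) μ) :
    ∫ x, W x r ∂μ ≤ ∫ x, W x s ∂μ :=
  integral_mono_ae hintr hints (hanti.mono fun _ hx => hx hs hr hsr)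

variable [IsProbabilityMeasure μ] {f : Ω → ℝ}

lemma integral_one_add (hf : Integrable f μ) : ∫ x, (1 + f x) ∂μ = 1 + ∫ x, f x ∂μ := by
  rw [integral_add (integrable_const 1) hf, integral_const, probReal_univ, one_smul]

lemma integral_one_add_le_one_iff (hf : Integrable f μ) :
    ∫ x, (1 + f x) ∂μ ≤ 1 ↔ ∫ x, f x ∂μ ≤ 0 := by
  rw [integral_one_add hf, add_le_iff_nonpos_right]

lemma integral_one_add_eq_one_iff (hf : Integrable f μ) :
    ∫ x, (1 + f x) ∂μ = 1 ↔ ∫ x, f x ∂μ = 0 := by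
  rw [integral_one_add hf, add_eq_left]

end Integral

section Identification

variable {Ω A B : Type*} [MeasurableSpace Ω]

/-- The image `ψ(M)` of a class `M` of distributions under `ψ = (ρ, φ)`. Since `φ` is set-valued,
`(a, b)` belongs to it when a single `F ∈ M` has `a = ρ F` and `b ∈ φ F`. -/
def attainedValues (M : Set (Measure Ω)) (ρ : Measure Ω → A) (φ : Measure Ω → Set B) :
    Set (A × B) :=
  {p | ∃ F ∈ M, p.1 = ρ F ∧ p.2 ∈ φ F}

variable [Preorder A] {𝒦 : Set Ω} {M : Set (Measure Ω)} {ρ : Measure Ω → A}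
  {φ : Measure Ω → Set B} {V : Ω → A → B → ℝ}

theorem stmt2_general
    (hprob : ∀ F ∈ M, IsProbabilityMeasure F)
    (hsupp : ∀ F ∈ M, ∀ᵐ x ∂F, x ∈ 𝒦)
    (hint : ∀ F ∈ M, ∀ a b, (a, b) ∈ attainedValues M ρ φ → Integrable (fun x => V x a b) F)
    (hident : ∀ F ∈ M, ∀ b ∈ φ F, ∫ x, V x (ρ F) b ∂F = 0)
    (hbound : ∀ x ∈ 𝒦, ∀ a b, (a, b) ∈ attainedValues M ρ φ → -1 ≤ V x a b)
    (hanti : ∀ x ∈ 𝒦, ∀ b, AntitoneOn (fun a => V x a b) {a | (a, b) ∈ attainedValues M ρ φ})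
    {F : Measure Ω} (hF : F ∈ M) {r : A} {z : B} (hrz : (r, z) ∈ attainedValues M ρ φ) :
    (∀ x ∈ 𝒦, 0 ≤ 1 + V x r z) ∧
      (ρ F ≤ r → z ∈ φ F → ∫ x, (1 + V x r z) ∂F ≤ 1) ∧
      (r = ρ F → z ∈ φ F → ∫ x, (1 + V x r z) ∂F = 1) := by
  have := hprob F hF
  have hintr : Integrable (fun x => V x r z) F := hint F hF r z hrz
  refine ⟨fun x hx => neg_le_iff_add_nonneg'.mp (hbound x hx r z hrz), fun hr hz => ?_, ?_⟩
  · have hanti_ae : ∀ᵐ x ∂F,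
        AntitoneOn (fun a => V x a z) {a | (a, z) ∈ attainedValues M ρ φ} :=
      (hsupp F hF).mono fun x hx => hanti x hx z
    have hρz : (ρ F, z) ∈ attainedValues M ρ φ := ⟨F, hF, rfl, hz⟩
    refine (integral_one_add_le_one_iff hintr).mpr ?_
    calc ∫ x, V x r z ∂F
      _ ≤ ∫ x, V x (ρ F) z ∂F :=
        integral_le_integral_of_ae_antitoneOn hanti_ae hρz hrz hr (hint F hF (ρ F) z hρz) hintr
      _ = 0 := hident F hF z hz
  · rintro rfl hz
    exact (integral_one_add_eq_one_iff hintr).mpr (hident F hF z hz)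

end Identification

/-- in the setting of the identification-function construction,
if moreover `a ↦ V(x,a,b)` is decreasing, then `E = 1 + V(L,r,z)` has expectation
at most `1` under the one-sided null `r ≥ ρ(F_L)`, `z ∈ φ(F_L)`, i.e. `E` is a
precise e-variable for `H(ψ)` (expectation equal to `1` when `r = ρ(F_L)`). -/
theorem stmt2 {k : ℕ}
    (𝒦 : Set ℝ) (M : Set (Measure ℝ))
    (hprob : ∀ F ∈ M, IsProbabilityMeasure F)
    (hsupp : ∀ F ∈ M, F 𝒦ᶜ = 0)
    (ρ : Measure ℝ → ℝ) (φ : Measure ℝ → Set (Fin k → ℝ))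
    (v : ℝ → (Fin k → ℝ) → (Fin k → ℝ)) (V : ℝ → ℝ → (Fin k → ℝ) → ℝ)
    (hVint : ∀ F ∈ M, ∀ (a : ℝ) (b : Fin k → ℝ), Integrable (fun x => V x a b) F)
    -- `(v, V)` is an identification function for `ψ = (ρ, φ)`
    (hident : ∀ F ∈ M, ∀ (a : ℝ) (b : Fin k → ℝ), a = ρ F → b ∈ φ F →
      (∫ x, v x b ∂F) = 0 ∧ (∫ x, V x a b ∂F) = 0)
    -- `inf { V(x,a,b) : x ∈ 𝒦, (a,b) ∈ ψ(M) } ≥ −1`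
    (hbound : ∀ x ∈ 𝒦, ∀ (a : ℝ) (b : Fin k → ℝ),
      (∃ F ∈ M, a = ρ F ∧ b ∈ φ F) → -1 ≤ V x a b)
    -- `a ↦ V(x,a,b)` is decreasing for every fixed `x ∈ 𝒦` and `b`
    (hmono : ∀ x ∈ 𝒦, ∀ b : Fin k → ℝ, Antitone (fun a => V x a b)) :
    ∀ F ∈ M, ∀ (r : ℝ) (z : Fin k → ℝ),
      (∃ G ∈ M, r = ρ G ∧ z ∈ φ G) →
      (∀ x ∈ 𝒦, 0 ≤ 1 + V x r z) ∧
      -- e-variable property under the one-sided null `H(ψ)`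
      (ρ F ≤ r → z ∈ φ F → (∫ x, (1 + V x r z) ∂F) ≤ 1) ∧
      -- preciseness: equality at the boundary of the null
      (r = ρ F → z ∈ φ F → (∫ x, (1 + V x r z) ∂F) = 1) := by
  exact fun F hF r z => stmt2_general hprob (fun G hG => mem_ae_iff.mpr (hsupp G hG))
    (fun G hG a b _ => hVint G hG a b) (fun G hG b hb => (hident G hG (ρ G) b rfl hb).2) hbound
    (fun x hx b => (hmono x hx b).antitoneOn _) hF
end

section
/- Let M be a set of Borel probability measures supported in 𝒦⊆ℝ and ψ=[ψ⁻,ψ⁺]:M→I(ℝ) an interval-valued functional that is identifiable with a strict identification function V:ℝ²→ℝ such that a↦V(x,a) is decreasing for each x and inf{V(x,a) : x∈𝒦, a∈ψ(M)} ≥ −1. Let h:ℝ→[0,1] and define e(x,a)=1+h(a)V(x,a). Then for every random variable L with law F_L∈M and every r∈ψ(M): (a) e(L,r) ≥ 0; (b) if r ≥ ψ⁻(F_L) then E[e(L,r)] ≤ 1, with equality whenever r∈ψ(F_L); and (c) if r < ψ⁻(F_L) and h(r) > 0, then E[e(L,r)] > 1. In particular, e(L,r) is a precise e-variable for both H(ψ):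 r ≥ ψ⁻(F_L) and H̃(ψ): r ∈ ψ(F_L), as F_L ranges over M. -/
open MeasureTheory

/-!
On a probability measure `F` the expectation of `1 + h(r) V(·, r)` is `1 + h(r) · ∫ V(x, r) dF(x)`.
The function `a ↦ ∫ V(x, a) dF(x)` is decreasing and vanishes exactly on `ψ(F)`, so it is
nonpositive to the right of `ψ⁻(F)` and strictly positive to the left of it.
-/

theorem one_add_mul_nonneg {R : Type*} [Ring R] [PartialOrder R] [IsOrderedRing R] {c v : R}
    (hc : c ∈ Set.Icc 0 1) (hv : -1 ≤ v) : 0 ≤ 1 + c * v :=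
  calc
    0 ≤ 1 - c := sub_nonneg.2 hc.2
    _ = 1 + c * (-1) := by rw [mul_neg_one, sub_eq_add_neg]
    _ ≤ 1 + c * v := by gcongr; exact hc.1

section StrictIdentification

variable {α A : Type*} [MeasurableSpace α]

theorem integral_one_add_const_mul {μ : Measure α} [IsProbabilityMeasure μ] {f : α → ℝ}
    (hf : Integrable f μ) (c : ℝ) : ∫ x, (1 + c * f x) ∂μ = 1 + c * ∫ x, f x ∂μ := by
  rw [integral_add (integrable_const 1) (hf.const_mul c), integral_const_mul, integral_const,
    probReal_univ, one_smul]

theorem antitoneOn_integral [Preorder A] {μ : Measure α} {V : α → A → ℝ} {s : Set A}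
    (hint : ∀ a ∈ s, Integrable (fun x ↦ V x a) μ) (hanti : ∀ x, AntitoneOn (V x) s) :
    AntitoneOn (fun a ↦ ∫ x, V x a ∂μ) s :=
  fun a ha b hb hab ↦ integral_mono (hint b hb) (hint a ha) fun x ↦ hanti x ha hb hab

/-- The range `ψ(M)` of a set-valued functional `ψ`: all values that `ψ` takes on members of `M`,
the union of the sets `ψ F` and not the collection of them. -/
def functionalRange (M : Set (Measure α)) (ψ : Measure α → Set A) : Set A :=
  {a | ∃ F ∈ M, a ∈ ψ F}

/-- `V` is a strict identification function for the set-valued functional `ψ` on `M`: for `F ∈ M`,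
its expected value singles out `ψ F` inside `ψ(M)`. Integrability of `V(·, a)` is not included, and
the integral of a nonintegrable function is `0`. -/
def IsStrictIdentification (M : Set (Measure α)) (ψ : Measure α → Set A) (V : α → A → ℝ) : Prop :=
  ∀ F ∈ M, ∀ a ∈ functionalRange M ψ, ∫ x, V x a ∂F = 0 ↔ a ∈ ψ F

namespace IsStrictIdentification

variable [Preorder A] {M : Set (Measure α)} {ψ : Measure α → Set A} {V : α → A → ℝ}
  {F : Measure α} {m r : A}

theorem integral_nonpos (hV : IsStrictIdentification M ψ V) (hF : F ∈ M)
    (hanti : AntitoneOn (fun a ↦ ∫ x, V x a ∂F) (functionalRange M ψ))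
    (hm : m ∈ ψ F) (hr : r ∈ functionalRange M ψ) (hmr : m ≤ r) : ∫ x, V x r ∂F ≤ 0 :=
  have hmM : m ∈ functionalRange M ψ := ⟨F, hF, hm⟩
  calc
    ∫ x, V x r ∂F ≤ ∫ x, V x m ∂F := hanti hmM hr hmr
    _ = 0 := (hV F hF m hmM).2 hm

theorem integral_pos (hV : IsStrictIdentification M ψ V) (hF : F ∈ M)
    (hanti : AntitoneOn (fun a ↦ ∫ x, V x a ∂F) (functionalRange M ψ))
    (hm : m ∈ ψ F) (hr : r ∈ functionalRange M ψ) (hrm : r ≤ m) (hrF : r ∉ ψ F) :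
    0 < ∫ x, V x r ∂F := by
  have hmM : m ∈ functionalRange M ψ := ⟨F, hF, hm⟩
  have hne : ∫ x, V x r ∂F ≠ 0 := mt (hV F hF r hr).1 hrF
  have hnonneg : 0 ≤ ∫ x, V x r ∂F :=
    calc
      0 = ∫ x, V x m ∂F := ((hV F hF m hmM).2 hm).symm
      _ ≤ ∫ x, V x r ∂F := hanti hr hmM hrm
  exact hnonneg.lt_of_ne' hne

end IsStrictIdentification

theorem stmt3_general [Preorder A] {𝒦 : Set α} {M : Set (Measure α)}
    (hprob : ∀ F ∈ M, IsProbabilityMeasure F)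
    {ψ : Measure α → Set A} {ψm : Measure α → A} (hleast : ∀ F ∈ M, IsLeast (ψ F) (ψm F))
    {V : α → A → ℝ}
    (hVint : ∀ F ∈ M, ∀ a ∈ functionalRange M ψ, Integrable (fun x ↦ V x a) F)
    (hanti : ∀ x, AntitoneOn (V x) (functionalRange M ψ))
    (hbound : ∀ x ∈ 𝒦, ∀ a ∈ functionalRange M ψ, -1 ≤ V x a)
    (hstrict : IsStrictIdentification M ψ V)
    {h : A → ℝ} (hh : ∀ a, h a ∈ Set.Icc (0 : ℝ) 1)
    {F : Measure α} (hF : F ∈ M) {r : A} (hr : r ∈ functionalRange M ψ) :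
    (∀ x ∈ 𝒦, 0 ≤ 1 + h r * V x r) ∧
      (ψm F ≤ r → ∫ x, (1 + h r * V x r) ∂F ≤ 1) ∧
      (r ∈ ψ F → ∫ x, (1 + h r * V x r) ∂F = 1) ∧
      (r < ψm F → 0 < h r → 1 < ∫ x, (1 + h r * V x r) ∂F) := by
  have := hprob F hF
  have hantiF := antitoneOn_integral (hVint F hF) hanti
  obtain ⟨hmem, hlower⟩ := hleast F hF
  rw [integral_one_add_const_mul (hVint F hF r hr)]
  refine ⟨fun x hx ↦ one_add_mul_nonneg (hh r) (hbound x hx r hr), fun hle ↦ ?_, fun hrF ↦ ?_,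
    fun hlt hpos ↦ ?_⟩
  · exact add_le_of_nonpos_right <| mul_nonpos_of_nonneg_of_nonpos (hh r).1 <|
      hstrict.integral_nonpos hF hantiF hmem hr hle
  · rw [(hstrict F hF r hr).2 hrF, mul_zero, add_zero]
  · have hrF : r ∉ ψ F := fun hrF ↦ hlt.not_ge (hlower hrF)
    exact lt_add_of_pos_right 1 <| mul_pos hpos <|
      hstrict.integral_pos hF hantiF hmem hr hlt.le hrF

end StrictIdentification

/-- sufficiency direction of the single-dimensional characterization:
for an interval-valued identifiable functional `ψ = [ψ⁻, ψ⁺]` with a strict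
identification function `V` decreasing in its second argument and bounded below
by `−1` on `𝒦 × ψ(M)`, and any `h : ℝ → [0,1]`, the function
`e(x,a) = 1 + h(a) V(x,a)` gives a precise e-variable `e(L,r)` for the hypotheses
`H(ψ) : r ≥ ψ⁻(F_L)` and `H̃(ψ) : r ∈ ψ(F_L)`, with expectation `> 1` when
`r < ψ⁻(F_L)` and `h(r) > 0`. -/
theorem stmt3
    (𝒦 : Set ℝ) (M : Set (Measure ℝ))
    (hprob : ∀ F ∈ M, IsProbabilityMeasure F)
    (hsupp : ∀ F ∈ M, F 𝒦ᶜ = 0)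
    (ψm ψp : Measure ℝ → ℝ) (hψ : ∀ F ∈ M, ψm F ≤ ψp F)
    (V : ℝ → ℝ → ℝ)
    (hVint : ∀ F ∈ M, ∀ a : ℝ, Integrable (fun x => V x a) F)
    -- `a ↦ V(x,a)` is decreasing
    (hmono : ∀ x : ℝ, Antitone (V x))
    -- `inf { V(x,a) : x ∈ 𝒦, a ∈ ψ(M) } ≥ −1`
    (hbound : ∀ x ∈ 𝒦, ∀ a : ℝ, (∃ F ∈ M, a ∈ Set.Icc (ψm F) (ψp F)) → -1 ≤ V x a)
    -- `V` is a strict identification function for `ψ` on `M`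
    (hstrict : ∀ F ∈ M, ∀ a : ℝ, (∃ G ∈ M, a ∈ Set.Icc (ψm G) (ψp G)) →
      ((∫ x, V x a ∂F) = 0 ↔ a ∈ Set.Icc (ψm F) (ψp F)))
    (h : ℝ → ℝ) (hh : ∀ a, h a ∈ Set.Icc (0:ℝ) 1) :
    ∀ F ∈ M, ∀ r : ℝ, (∃ G ∈ M, r ∈ Set.Icc (ψm G) (ψp G)) →
      -- (a) nonnegativity of `e(L,r)`
      (∀ x ∈ 𝒦, 0 ≤ 1 + h r * V x r) ∧
      -- (b) e-variable for the one-sided null, with equality on the two-sided null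
      (ψm F ≤ r → (∫ x, (1 + h r * V x r) ∂F) ≤ 1) ∧
      (r ∈ Set.Icc (ψm F) (ψp F) → (∫ x, (1 + h r * V x r) ∂F) = 1) ∧
      -- (c) consistency: expectation `> 1` under underestimation
      (r < ψm F → 0 < h r → 1 < ∫ x, (1 + h r * V x r) ∂F) :=
  fun _F hF _r hr ↦ stmt3_general hprob (fun F hF ↦ isLeast_Icc (hψ F hF))
    (fun F hF a _ ↦ hVint F hF a) (fun x ↦ (hmono x).antitoneOn _) hbound hstrict hh hF hr
end

section
/- Let (ρ,φ):M→ℝ×I(ℝ) be a Bayes pair with loss function S:ℝ²→ℝ, where M consists of Borel probability measures supported in 𝒦⊆ℝ. Let h:ℝ²→[0,∞) satisfy inf{h(a,b)(S(x,b)−a) : x∈𝒦, (a,b)∈ψ(M)} ≥ −1, where ψ=(ρ,φ). Then for every random variable L with law F_L∈M and every (r,z)∈ψ(M), the random variable E = 1+h(r,z)(S(L,z)−r) is nonnegative and satisfies E[E]=1 whenever r=ρ(F_L) and z∈φ(F_L); hence E is a precise e-variable for the two-sided hypothesis H̃(ψ): r=ρ(F_L) and z∈φ(F_L). Moreover, if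 r=ρ(F_L), z∉φ(F_L) and h(r,z)>0, then E[E] > 1. -/
open MeasureTheory

/-!
Expectation is affine: under a probability measure `F`, the statistic `E = 1 + h(r,z)(S(·,z) - r)`
has mean `1 + h(r,z)(∫ S(·,z) dF - r)`. At `r = ρ(F)` the bracket is the excess risk of the action
`z`, which is nonnegative and vanishes exactly on the argmin `φ(F)`.
-/

section BayesPair

variable {Ω A : Type*} {S : Ω → A → ℝ} {r : ℝ} {z : A}

/-- The e-statistic `E = 1 + h(r,z)(S(x,z) - r)` testing the forecast `(r, z)` of a Bayes pair with
loss `S` at the observation `x`. -/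
def bayesEStat (S : Ω → A → ℝ) (h : ℝ → A → ℝ) (r : ℝ) (z : A) (x : Ω) : ℝ :=
  1 + h r z * (S x z - r)

theorem bayesEStat_nonneg_iff {h : ℝ → A → ℝ} {x : Ω} :
    0 ≤ bayesEStat S h r z x ↔ -1 ≤ h r z * (S x z - r) :=
  neg_le_iff_add_nonneg'.symm

variable [MeasurableSpace Ω] {M : Set (Measure Ω)} {F : Measure Ω} {ρ : Measure Ω → ℝ}
  {φ : Measure Ω → Set A}

/-- `(ρ, φ)` is a Bayes pair on `M` with loss function `S`: for `F ∈ M`, `φ F` is the set of actions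
minimizing the expected loss `∫ S x a ∂F`, and `ρ F` is the minimal value. Observations and actions
range over arbitrary types; attainment of the minimum is `nonempty`, and `integrable` excludes the
junk value `0` of a divergent integral. -/
structure IsBayesPair (M : Set (Measure Ω)) (S : Ω → A → ℝ) (ρ : Measure Ω → ℝ)
    (φ : Measure Ω → Set A) : Prop where
  nonempty : ∀ F ∈ M, (φ F).Nonempty
  integrable : ∀ F ∈ M, ∀ a, Integrable (fun x => S x a) F
  mem_iff_forall_le : ∀ F ∈ M, ∀ a, a ∈ φ F ↔ ∀ b, ∫ x, S x a ∂F ≤ ∫ x, S x b ∂F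
  risk_eq : ∀ F ∈ M, ∀ a ∈ φ F, ρ F = ∫ x, S x a ∂F

theorem integral_one_add_mul_sub {𝕜 : Type*} [RCLike 𝕜] [IsProbabilityMeasure F] {f : Ω → 𝕜}
    (hf : Integrable f F) (c r : 𝕜) :
    ∫ x, (1 + c * (f x - r)) ∂F = 1 + c * (∫ x, f x ∂F - r) := by
  have hsub : Integrable (fun x => f x - r) F := hf.sub (integrable_const r)
  rw [integral_add (integrable_const 1) (hsub.const_mul c), integral_const_mul,
    integral_sub hf (integrable_const r), integral_const, integral_const, probReal_univ,
    one_smul, one_smul]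

namespace IsBayesPair

theorem risk_le_integral (hB : IsBayesPair M S ρ φ) (hF : F ∈ M) (a : A) :
    ρ F ≤ ∫ x, S x a ∂F := by
  obtain ⟨b, hb⟩ := hB.nonempty F hF
  rw [hB.risk_eq F hF b hb]
  exact (hB.mem_iff_forall_le F hF b).1 hb a

theorem risk_lt_integral (hB : IsBayesPair M S ρ φ) (hF : F ∈ M) {a : A} (ha : a ∉ φ F) :
    ρ F < ∫ x, S x a ∂F := by
  refine (hB.risk_le_integral hF a).lt_of_ne fun hrisk => ha ?_
  exact (hB.mem_iff_forall_le F hF a).2 fun b => hrisk ▸ hB.risk_le_integral hF b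

theorem integral_eStat (hB : IsBayesPair M S ρ φ) (hF : F ∈ M) [IsProbabilityMeasure F]
    (h : ℝ → A → ℝ) (r : ℝ) (z : A) :
    ∫ x, bayesEStat S h r z x ∂F = 1 + h r z * (∫ x, S x z ∂F - r) :=
  integral_one_add_mul_sub (hB.integrable F hF z) (h r z) r

theorem integral_eStat_eq_one (hB : IsBayesPair M S ρ φ) (hF : F ∈ M) [IsProbabilityMeasure F]
    (h : ℝ → A → ℝ) (hz : z ∈ φ F) :
    ∫ x, bayesEStat S h (ρ F) z x ∂F = 1 := by
  rw [hB.integral_eStat hF, ← hB.risk_eq F hF z hz, sub_self, mul_zero, add_zero]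

theorem one_lt_integral_eStat (hB : IsBayesPair M S ρ φ) (hF : F ∈ M) [IsProbabilityMeasure F]
    {h : ℝ → A → ℝ} (hz : z ∉ φ F) (hpos : 0 < h (ρ F) z) :
    1 < ∫ x, bayesEStat S h (ρ F) z x ∂F := by
  rw [hB.integral_eStat hF]
  exact lt_add_of_pos_right 1 (mul_pos hpos (sub_pos.2 (hB.risk_lt_integral hF hz)))

end IsBayesPair

theorem stmt5_general {𝒦 : Set Ω} {h : ℝ → A → ℝ}
    (hprob : ∀ F ∈ M, IsProbabilityMeasure F) (hB : IsBayesPair M S ρ φ)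
    (hbound : ∀ x ∈ 𝒦, ∀ a b, (∃ F ∈ M, a = ρ F ∧ b ∈ φ F) → -1 ≤ h a b * (S x b - a)) :
    ∀ F ∈ M, ∀ r z, (∃ G ∈ M, r = ρ G ∧ z ∈ φ G) →
      (∀ x ∈ 𝒦, 0 ≤ bayesEStat S h r z x) ∧
      (r = ρ F → z ∈ φ F → ∫ x, bayesEStat S h r z x ∂F = 1) ∧
      (r = ρ F → z ∉ φ F → 0 < h r z → 1 < ∫ x, bayesEStat S h r z x ∂F) := by
  intro F hF r z hrz
  have := hprob F hF
  refine ⟨fun x hx => bayesEStat_nonneg_iff.2 (hbound x hx r z hrz), ?_, ?_⟩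
  · rintro rfl hz
    exact hB.integral_eStat_eq_one hF h hz
  · rintro rfl hz hpos
    exact hB.one_lt_integral_eStat hF hz hpos

end BayesPair

/-- Proposition bayes2 (i): for a Bayes pair `(ρ, φ)` with loss `S`
and `h ≥ 0` with `h(a,b)(S(x,b) − a) ≥ −1` on `𝒦 × ψ(M)`, the random variable
`E = 1 + h(r,z)(S(L,z) − r)` is nonnegative, has expectation 1 under the
two-sided null `r = ρ(F_L)`, `z ∈ φ(F_L)` (a precise e-variable for `H̃(ψ)`),
and expectation `> 1` when `r = ρ(F_L)`, `z ∉ φ(F_L)` and `h(r,z) > 0`. -/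
theorem stmt5
    (𝒦 : Set ℝ) (M : Set (Measure ℝ))
    (hprob : ∀ F ∈ M, IsProbabilityMeasure F)
    (hsupp : ∀ F ∈ M, F 𝒦ᶜ = 0)
    (S : ℝ → ℝ → ℝ) (ρ : Measure ℝ → ℝ) (φ : Measure ℝ → Set ℝ)
    -- `φ F` is a (nonempty) closed real interval
    (hInterval : ∀ F ∈ M, ∃ a b : ℝ, a ≤ b ∧ φ F = Set.Icc a b)
    (hSint : ∀ F ∈ M, ∀ a : ℝ, Integrable (fun x => S x a) F)
    -- Bayes pair: `φ F` is the argmin of the expected loss, `ρ F` its minimal value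
    (hargmin : ∀ F ∈ M, ∀ a : ℝ, a ∈ φ F ↔ ∀ b : ℝ, ∫ x, S x a ∂F ≤ ∫ x, S x b ∂F)
    (hmin : ∀ F ∈ M, ∀ a ∈ φ F, ρ F = ∫ x, S x a ∂F)
    (h : ℝ → ℝ → ℝ) (hh0 : ∀ a b : ℝ, 0 ≤ h a b)
    -- `inf { h(a,b)(S(x,b) − a) : x ∈ 𝒦, (a,b) ∈ ψ(M) } ≥ −1`
    (hbound : ∀ x ∈ 𝒦, ∀ a b : ℝ,
      (∃ F ∈ M, a = ρ F ∧ b ∈ φ F) → -1 ≤ h a b * (S x b - a)) :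
    ∀ F ∈ M, ∀ r z : ℝ, (∃ G ∈ M, r = ρ G ∧ z ∈ φ G) →
      -- nonnegativity of `E`
      (∀ x ∈ 𝒦, 0 ≤ 1 + h r z * (S x z - r)) ∧
      -- `E` is a precise e-variable for `H̃(ψ)`
      (r = ρ F → z ∈ φ F → (∫ x, (1 + h r z * (S x z - r)) ∂F) = 1) ∧
      -- consistency when the statistic is misspecified
      (r = ρ F → z ∉ φ F → 0 < h r z →
        1 < ∫ x, (1 + h r z * (S x z - r)) ∂F) := by
  have hne : ∀ F ∈ M, (φ F).Nonempty := fun F hF =>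
    let ⟨_, _, hab, hφ⟩ := hInterval F hF
    hφ ▸ Set.nonempty_Icc.2 hab
  exact stmt5_general hprob ⟨hne, hSint, hargmin, hmin⟩ hbound
end

section
/- Let (ρ,φ):M→ℝ×I(ℝ) be a Bayes pair with loss function S:ℝ²→ℝ, where M consists of Borel probability measures supported in 𝒦⊆ℝ, and let h:ℝ²→[0,∞) satisfy inf{h(a,b)(S(x,b)−a) : x∈𝒦, (a,b)∈ψ(M)} ≥ −1 for ψ=(ρ,φ). Suppose in addition that a ↦ h(a,b)(S(x,b)−a) is decreasing for each fixed x∈𝒦 and b. Then for every random variable L with law F_L∈M and every (r,z)∈ψ(M) with r ≥ ρ(F_L) and z∈φ(F_L), one has E[1+h(r,z)(S(L,z)−r)] ≤ 1, so E = 1+h(r,z)(S(L,z)−r) is a precise e-variable for the one-sided hypothesis H(ψ): r ≥ ρ(F_L) and z∈φ(F_L). Moreover, if r < ρ(F_L), z∈φ(M) and h(r,z) > 0, then E[E] > 1. -/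
open MeasureTheory

/-!
The expectation of `1 + h(r,z)(S(L,z) − r)` under `F` is `1 + h(r,z)(∫ S(x,z) dF − r)`, so it is
compared with `1` through the sign of `∫ S(x,z) dF − r`. The integral equals `ρ(F)` when `z ∈ φ(F)`,
and it is at least `ρ(F)` for every other `z`, because `ρ(F)` is the minimal expected loss.
-/

section BayesPair

variable {X A : Type*}

/-- The candidate e-variable for the forecast `(r, z)` of the Bayes pair of the loss `S`, as a
function of the realised observation `x`. The weight `h r z` is the size of the bet placed against
the forecast. -/
def bayesEVariable (S : X → A → ℝ) (h : ℝ → A → ℝ) (r : ℝ) (z : A) (x : X) : ℝ :=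
  1 + h r z * (S x z - r)

variable [MeasurableSpace X]

/-- `(ρ, φ)` is a Bayes pair on the set `M` of probability measures: `φ F` is the set of all actions
minimising the expected loss `∫ x, S x a ∂F`, and `ρ F` is the minimum. That the minimum is attained
and finite is expressed by `nonempty` and `integrable`; the action space `A` is arbitrary, so `φ F`
is not assumed to be an interval. -/
structure IsBayesPair_s6 (M : Set (Measure X)) (S : X → A → ℝ) (ρ : Measure X → ℝ)
    (φ : Measure X → Set A) : Prop where
  isProbabilityMeasure : ∀ F ∈ M, IsProbabilityMeasure F
  integrable : ∀ F ∈ M, ∀ a, Integrable (fun x => S x a) F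
  nonempty : ∀ F ∈ M, (φ F).Nonempty
  mem_iff : ∀ F ∈ M, ∀ a, a ∈ φ F ↔ ∀ b, ∫ x, S x a ∂F ≤ ∫ x, S x b ∂F
  eq_integral : ∀ F ∈ M, ∀ a ∈ φ F, ρ F = ∫ x, S x a ∂F

theorem integral_bayesEVariable {F : Measure X} [IsProbabilityMeasure F] {S : X → A → ℝ} {z : A}
    (hS : Integrable (fun x => S x z) F) (h : ℝ → A → ℝ) (r : ℝ) :
    ∫ x, bayesEVariable S h r z x ∂F = 1 + h r z * (∫ x, S x z ∂F - r) := by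
  have hSr : Integrable (fun x => S x z - r) F := hS.sub (integrable_const r)
  simp only [bayesEVariable]
  rw [integral_add (integrable_const 1) (hSr.const_mul _), integral_const_mul,
    integral_sub hS (integrable_const r), integral_const, integral_const, probReal_univ,
    one_smul, one_smul]

namespace IsBayesPair_s6

variable {M : Set (Measure X)} {S : X → A → ℝ} {ρ : Measure X → ℝ} {φ : Measure X → Set A}
  {F : Measure X} {h : ℝ → A → ℝ} {r : ℝ} {z : A}

theorem le_integral (hB : IsBayesPair_s6 M S ρ φ) (hF : F ∈ M) (b : A) : ρ F ≤ ∫ x, S x b ∂F := by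
  obtain ⟨a, ha⟩ := hB.nonempty F hF
  calc ρ F = ∫ x, S x a ∂F := hB.eq_integral F hF a ha
    _ ≤ ∫ x, S x b ∂F := (hB.mem_iff F hF a).1 ha b

theorem integral_bayesEVariable_of_mem (hB : IsBayesPair_s6 M S ρ φ) (hF : F ∈ M) (hz : z ∈ φ F)
    (h : ℝ → A → ℝ) (r : ℝ) :
    ∫ x, bayesEVariable S h r z x ∂F = 1 + h r z * (ρ F - r) := by
  have := hB.isProbabilityMeasure F hF
  rw [integral_bayesEVariable (hB.integrable F hF z), hB.eq_integral F hF z hz]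

theorem integral_bayesEVariable_eq_one (hB : IsBayesPair_s6 M S ρ φ) (hF : F ∈ M) (hz : z ∈ φ F)
    (h : ℝ → A → ℝ) : ∫ x, bayesEVariable S h (ρ F) z x ∂F = 1 := by
  rw [hB.integral_bayesEVariable_of_mem hF hz, sub_self, mul_zero, add_zero]

theorem integral_bayesEVariable_le_one (hB : IsBayesPair_s6 M S ρ φ) (hF : F ∈ M) (hz : z ∈ φ F)
    (hr : ρ F ≤ r) (hh : 0 ≤ h r z) : ∫ x, bayesEVariable S h r z x ∂F ≤ 1 := by
  rw [hB.integral_bayesEVariable_of_mem hF hz]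
  exact add_le_of_nonpos_right (mul_nonpos_of_nonneg_of_nonpos hh (sub_nonpos.2 hr))

theorem one_lt_integral_bayesEVariable (hB : IsBayesPair_s6 M S ρ φ) (hF : F ∈ M)
    (hr : r < ρ F) (hh : 0 < h r z) : 1 < ∫ x, bayesEVariable S h r z x ∂F := by
  have := hB.isProbabilityMeasure F hF
  rw [integral_bayesEVariable (hB.integrable F hF z)]
  exact lt_add_of_pos_right 1 (mul_pos hh (sub_pos.2 (hr.trans_le (hB.le_integral hF z))))

end IsBayesPair_s6

theorem stmt6_general {𝒦 : Set X} {M : Set (Measure X)} {S : X → A → ℝ} {ρ : Measure X → ℝ}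
    {φ : Measure X → Set A} (hB : IsBayesPair_s6 M S ρ φ)
    {h : ℝ → A → ℝ} (hh0 : ∀ a b, 0 ≤ h a b)
    (hbound : ∀ x ∈ 𝒦, ∀ a b, (∃ F ∈ M, a = ρ F ∧ b ∈ φ F) → -1 ≤ h a b * (S x b - a)) :
    ∀ F ∈ M,
      (∀ r z, (∃ G ∈ M, r = ρ G ∧ z ∈ φ G) →
        (∀ x ∈ 𝒦, 0 ≤ bayesEVariable S h r z x) ∧
        (ρ F ≤ r → z ∈ φ F → ∫ x, bayesEVariable S h r z x ∂F ≤ 1) ∧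
        (r = ρ F → z ∈ φ F → ∫ x, bayesEVariable S h r z x ∂F = 1)) ∧
      (∀ r z, r < ρ F → 0 < h r z → 1 < ∫ x, bayesEVariable S h r z x ∂F) := by
  refine fun F hF => ⟨fun r z hrz => ⟨fun x hx => ?_, fun hr hz => ?_, ?_⟩, fun r z hr hh => ?_⟩
  · exact neg_le_iff_add_nonneg'.1 (hbound x hx r z hrz)
  · exact hB.integral_bayesEVariable_le_one hF hz hr (hh0 r z)
  · rintro rfl hz
    exact hB.integral_bayesEVariable_eq_one hF hz h
  · exact hB.one_lt_integral_bayesEVariable hF hr hh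

end BayesPair

/-- Proposition bayes2 (ii): in the Bayes-pair setting, if moreover
`a ↦ h(a,b)(S(x,b) − a)` is decreasing, then `E = 1 + h(r,z)(S(L,z) − r)` has
expectation at most 1 under the one-sided null `r ≥ ρ(F_L)`, `z ∈ φ(F_L)`
(a precise e-variable for `H(ψ)`), and expectation `> 1` whenever `r < ρ(F_L)`,
`z ∈ φ(M)` and `h(r,z) > 0`. -/
theorem stmt6
    (𝒦 : Set ℝ) (M : Set (Measure ℝ))
    (hprob : ∀ F ∈ M, IsProbabilityMeasure F)
    (hsupp : ∀ F ∈ M, F 𝒦ᶜ = 0)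
    (S : ℝ → ℝ → ℝ) (ρ : Measure ℝ → ℝ) (φ : Measure ℝ → Set ℝ)
    (hInterval : ∀ F ∈ M, ∃ a b : ℝ, a ≤ b ∧ φ F = Set.Icc a b)
    (hSint : ∀ F ∈ M, ∀ a : ℝ, Integrable (fun x => S x a) F)
    (hargmin : ∀ F ∈ M, ∀ a : ℝ, a ∈ φ F ↔ ∀ b : ℝ, ∫ x, S x a ∂F ≤ ∫ x, S x b ∂F)
    (hmin : ∀ F ∈ M, ∀ a ∈ φ F, ρ F = ∫ x, S x a ∂F)
    (h : ℝ → ℝ → ℝ) (hh0 : ∀ a b : ℝ, 0 ≤ h a b)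
    (hbound : ∀ x ∈ 𝒦, ∀ a b : ℝ,
      (∃ F ∈ M, a = ρ F ∧ b ∈ φ F) → -1 ≤ h a b * (S x b - a))
    -- `a ↦ h(a,b)(S(x,b) − a)` is decreasing for each fixed `x ∈ 𝒦` and `b`
    (hmono : ∀ x ∈ 𝒦, ∀ b : ℝ, Antitone (fun a => h a b * (S x b - a))) :
    ∀ F ∈ M,
      (∀ r z : ℝ, (∃ G ∈ M, r = ρ G ∧ z ∈ φ G) →
        (∀ x ∈ 𝒦, 0 ≤ 1 + h r z * (S x z - r)) ∧
        -- `E` is a precise e-variable for the one-sided null `H(ψ)`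
        (ρ F ≤ r → z ∈ φ F → (∫ x, (1 + h r z * (S x z - r)) ∂F) ≤ 1) ∧
        (r = ρ F → z ∈ φ F → (∫ x, (1 + h r z * (S x z - r)) ∂F) = 1)) ∧
      -- consistency: expectation `> 1` under underestimation of `ρ`
      (∀ r z : ℝ, r < ρ F → (∃ G ∈ M, z ∈ φ G) → 0 < h r z →
        1 < ∫ x, (1 + h r z * (S x z - r)) ∂F) := by
  have hne : ∀ F ∈ M, (φ F).Nonempty := fun F hF => by
    obtain ⟨a, b, hab, hφ⟩ := hInterval F hF
    exact hφ ▸ Set.nonempty_Icc.2 hab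
  intro F hF
  obtain ⟨hnull, hunder⟩ := stmt6_general ⟨hprob, hSint, hne, hargmin, hmin⟩ hh0 hbound F hF
  exact ⟨hnull, fun r z hr _ => hunder r z hr⟩
end

section
/- Let (Ω,𝔽,Q) be a probability space with a filtration (ℱ_t)_{t=0,…,T}. Let N_0 be a random variable taking values in {1,…,T}, independent of ℱ_T, and for each n in the support of N_0 let 0 = t_0^{(n)} < t_1^{(n)} < ⋯ < t_n^{(n)} = T be a prespecified partition. Let (M̃^{re}_t)_{t∈𝕋} be the process obtained by running an e-process and restarting it at value 1 at the start of each block, and assume that under Q, for each n and each i∈{1,…,n}, the restarted block process (M̃^{re}_t)_{t∈(t_{i−1}^{(n)}, t_i^{(n)}]}, prepended with the value 1 at time t_{i−1}^{(n)}, is a nonnegative supermartingale. Then for every α∈(0,1), E^Q[ (1/N_0) Σ_{i=1}^{N_0} 1{ sup_{t_{i−1}^{(N_0)} < t ≤ t_i^{(N_0)}} M̃^{re}_t ≥ 1/α } ] ≤ α; that is, the per comparison error rate (PCER) of the restarted e-test at threshold 1/α is at most α. -/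
open MeasureTheory

/-!
A nonnegative supermartingale stopped when it first reaches a level `c` has mean at most its
initial mean, so Markov's inequality gives Ville's inequality. Each restarted block, prolonged
by `1` before the block and held constant after it, is a nonnegative supermartingale started at `1`;
hence each block rejects with probability at most `α`. The rejection events lie in `ℱ_T`, so
independence of `N₀` lets one condition on `N₀ = n`, where the error rate is an average of `n`
such probabilities.
-/

section Ville

variable {Ω : Type*} {m0 : MeasurableSpace Ω} {μ : Measure Ω} {ℱ : Filtration ℕ m0}
  {f : ℕ → Ω → ℝ}

theorem integral_stoppedValue_le_integral_zero_of_supermartingale [SigmaFiniteFiltration μ ℱ]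
    (hf : Supermartingale f ℱ μ) {τ : Ω → WithTop ℕ} (hτ : IsStoppingTime ℱ τ) {n : ℕ}
    (hτn : ∀ ω, τ ω ≤ n) :
    ∫ ω, stoppedValue f τ ω ∂μ ≤ ∫ ω, f 0 ω ∂μ := by
  have h : ∫ ω, -f 0 ω ∂μ ≤ ∫ ω, -stoppedValue f τ ω ∂μ :=
    hf.neg.expected_stoppedValue_mono (isStoppingTime_const ℱ 0) hτ (fun _ ↦ zero_le) hτn
  rwa [integral_neg, integral_neg, neg_le_neg_iff] at h

theorem exists_le_iff_le_stoppedValue_hittingBtwn {c : ℝ} {n : ℕ} {ω : Ω} :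
    (∃ k ≤ n, c ≤ f k ω) ↔
      c ≤ stoppedValue f (fun ω ↦ (hittingBtwn f (Set.Ici c) 0 n ω : ℕ)) ω := by
  constructor
  · rintro ⟨k, hkn, hck⟩
    exact stoppedValue_hittingBtwn_mem (s := Set.Ici c) ⟨k, ⟨zero_le, hkn⟩, hck⟩
  · exact fun h ↦ ⟨_, hittingBtwn_le ω, h⟩

theorem ville_inequality [SigmaFiniteFiltration μ ℱ] (hf : Supermartingale f ℱ μ)
    (hnonneg : ∀ k, 0 ≤ᵐ[μ] f k) (c : ℝ) (n : ℕ) :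
    c * μ.real {ω | ∃ k ≤ n, c ≤ f k ω} ≤ ∫ ω, f 0 ω ∂μ := by
  let τ : Ω → WithTop ℕ := fun ω ↦ (hittingBtwn f (Set.Ici c) 0 n ω : ℕ)
  have hτ : IsStoppingTime ℱ τ :=
    hf.stronglyAdapted.adapted.isStoppingTime_hittingBtwn measurableSet_Ici
  have hτn (ω : Ω) : τ ω ≤ n := WithTop.coe_le_coe.2 (hittingBtwn_le ω)
  have hstopped_nonneg : 0 ≤ᵐ[μ] stoppedValue f τ := by
    filter_upwards [ae_all_iff.2 hnonneg] with ω hω using hω _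
  calc c * μ.real {ω | ∃ k ≤ n, c ≤ f k ω}
      = c * μ.real {ω | c ≤ stoppedValue f τ ω} :=
        congrArg (c * μ.real ·) (Set.ext fun _ ↦ exists_le_iff_le_stoppedValue_hittingBtwn)
    _ ≤ ∫ ω, stoppedValue f τ ω ∂μ :=
        mul_meas_ge_le_integral_of_nonneg hstopped_nonneg
          (integrable_stoppedValue ℕ hτ hf.integrable hτn) c
    _ ≤ ∫ ω, f 0 ω ∂μ := integral_stoppedValue_le_integral_zero_of_supermartingale hf hτ hτn

end Ville

/-- The process `M` on the block `(a, b]`, prepended with the value `1` at time `a`, is a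
nonnegative supermartingale for `ℱ`. An empty block imposes no condition. -/
structure IsRestartedSupermartingaleOn {Ω : Type*} {m0 : MeasurableSpace Ω}
    (M : ℕ → Ω → ℝ) (ℱ : Filtration ℕ m0) (μ : Measure Ω) (a b : ℕ) : Prop where
  stronglyMeasurable : ∀ s, a < s → s ≤ b → StronglyMeasurable[ℱ s] (M s)
  integrable : ∀ s, a < s → s ≤ b → Integrable (M s) μ
  nonneg : ∀ s, a < s → s ≤ b → 0 ≤ᵐ[μ] M s
  condExp_start_le : a < b → μ[M (a + 1) | ℱ a] ≤ᵐ[μ] fun _ ↦ 1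
  condExp_succ_le : ∀ s, a < s → s < b → μ[M (s + 1) | ℱ s] ≤ᵐ[μ] M s

/-- The event that `M` reaches the level `c` during the block `(a, b]`. -/
def blockCrossing {Ω : Type*} (M : ℕ → Ω → ℝ) (a b : ℕ) (c : ℝ) : Set Ω :=
  {ω | ∃ s, a < s ∧ s ≤ b ∧ c ≤ M s ω}

/-- The extension of `M` from the block `(a, b]` to all times: it equals `1` up to time `a` and
keeps the value `M b` after time `b`. If the block is empty it is constantly `1`. -/
noncomputable def blockExtension {Ω : Type*} (M : ℕ → Ω → ℝ) (a b : ℕ) : ℕ → Ω → ℝ :=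
  fun s ↦ if a < min s b then M (min s b) else 1

section Block

variable {Ω : Type*} {m0 : MeasurableSpace Ω} {μ : Measure Ω} {ℱ : Filtration ℕ m0}
  {M : ℕ → Ω → ℝ} {a b : ℕ}

theorem blockExtension_of_mem {s : ℕ} (has : a < s) (hsb : s ≤ b) :
    blockExtension M a b s = M s := by
  simp only [blockExtension, min_eq_left hsb, if_pos has]

theorem blockExtension_of_le {s : ℕ} (hsa : s ≤ a) : blockExtension M a b s = 1 :=
  if_neg (by omega)

theorem blockExtension_succ_eq_of_notMem {s : ℕ} (hs : s < a ∨ b ≤ s) :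
    blockExtension M a b (s + 1) = blockExtension M a b s := by
  rcases hs with hsa | hbs
  · rw [blockExtension_of_le hsa, blockExtension_of_le hsa.le]
  · simp only [blockExtension, min_eq_right hbs, min_eq_right (hbs.trans s.le_succ)]

theorem blockCrossing_subset_exists_le_blockExtension (c : ℝ) :
    blockCrossing M a b c ⊆ {ω | ∃ k ≤ b, c ≤ blockExtension M a b k ω} := by
  rintro ω ⟨s, has, hsb, hcs⟩
  exact ⟨s, hsb, by rwa [blockExtension_of_mem has hsb]⟩

namespace IsRestartedSupermartingaleOn

theorem measurableSet_blockCrossing (h : IsRestartedSupermartingaleOn M ℱ μ a b) (c : ℝ) :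
    MeasurableSet[ℱ b] (blockCrossing M a b c) := by
  have h_eq : blockCrossing M a b c = ⋃ s ∈ Set.Ioc a b, {ω | c ≤ M s ω} := by
    ext ω
    simp only [blockCrossing, Set.mem_ofPred_eq, Set.mem_iUnion, Set.mem_Ioc, exists_prop,
      and_assoc]
  rw [h_eq]
  exact MeasurableSet.biUnion (Set.to_countable _) fun s hs ↦
    ℱ.mono hs.2 _ ((h.stronglyMeasurable s hs.1 hs.2).measurable measurableSet_Ici)

theorem stronglyAdapted_blockExtension (h : IsRestartedSupermartingaleOn M ℱ μ a b) :
    StronglyAdapted ℱ (blockExtension M a b) := by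
  intro s
  unfold blockExtension
  split_ifs with hs
  · exact (h.stronglyMeasurable _ hs (min_le_right s b)).mono (ℱ.mono (min_le_left s b))
  · exact stronglyMeasurable_one

theorem integrable_blockExtension [IsFiniteMeasure μ]
    (h : IsRestartedSupermartingaleOn M ℱ μ a b) (s : ℕ) :
    Integrable (blockExtension M a b s) μ := by
  unfold blockExtension
  split_ifs with hs
  · exact h.integrable _ hs (min_le_right s b)
  · exact integrable_const 1

theorem blockExtension_nonneg (h : IsRestartedSupermartingaleOn M ℱ μ a b) (s : ℕ) :
    0 ≤ᵐ[μ] blockExtension M a b s := by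
  unfold blockExtension
  split_ifs with hs
  · exact h.nonneg _ hs (min_le_right s b)
  · exact .of_forall fun _ ↦ zero_le_one

theorem supermartingale_blockExtension [IsFiniteMeasure μ]
    (h : IsRestartedSupermartingaleOn M ℱ μ a b) :
    Supermartingale (blockExtension M a b) ℱ μ := by
  refine supermartingale_nat h.stronglyAdapted_blockExtension h.integrable_blockExtension
    fun s ↦ ?_
  by_cases hs : s < a ∨ b ≤ s
  · rw [blockExtension_succ_eq_of_notMem hs, condExp_of_stronglyMeasurable (ℱ.le s)
      (h.stronglyAdapted_blockExtension s) (h.integrable_blockExtension s)]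
  · obtain ⟨has, hsb⟩ : a ≤ s ∧ s < b := by omega
    rw [blockExtension_of_mem (Nat.lt_succ_of_le has) hsb]
    rcases has.eq_or_lt with rfl | has
    · rw [blockExtension_of_le le_rfl]
      exact h.condExp_start_le hsb
    · rw [blockExtension_of_mem has hsb.le]
      exact h.condExp_succ_le s has hsb

theorem measureReal_blockCrossing_le [IsProbabilityMeasure μ]
    (h : IsRestartedSupermartingaleOn M ℱ μ a b) {α : ℝ} (hα : 0 < α) :
    μ.real (blockCrossing M a b (1 / α)) ≤ α := by
  have h_ville : 1 / α * μ.real (blockCrossing M a b (1 / α)) ≤ 1 :=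
    calc 1 / α * μ.real (blockCrossing M a b (1 / α))
        ≤ 1 / α * μ.real {ω | ∃ k ≤ b, 1 / α ≤ blockExtension M a b k ω} := by
          gcongr
          · exact measure_ne_top μ _
          · exact blockCrossing_subset_exists_le_blockExtension _
      _ ≤ ∫ ω, blockExtension M a b 0 ω ∂μ :=
          ville_inequality h.supermartingale_blockExtension h.blockExtension_nonneg _ b
      _ = 1 := by simp [blockExtension_of_le (Nat.zero_le a)]
  rwa [one_div_mul_eq_div, div_le_one hα] at h_ville

end IsRestartedSupermartingaleOn

end Block

section Conditioning

open scoped ENNReal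

theorem setLIntegral_eq_mul_of_indep {Ω : Type*} {m' m m0 : MeasurableSpace Ω} {μ : Measure Ω}
    (hm' : m' ≤ m0) (hm : m ≤ m0) (hindep : ProbabilityTheory.Indep m' m μ)
    {E : Set Ω} (hE : MeasurableSet[m'] E) {g : Ω → ℝ≥0∞} (hg : Measurable[m] g) :
    ∫⁻ ω in E, g ω ∂μ = μ E * ∫⁻ ω, g ω ∂μ := by
  have hE_one : Measurable[m'] (E.indicator (1 : Ω → ℝ≥0∞)) := measurable_const.indicator hE
  calc ∫⁻ ω in E, g ω ∂μ
      = ∫⁻ ω, E.indicator 1 ω * g ω ∂μ := by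
        simp only [← lintegral_indicator (hm' _ hE), ← Set.indicator_mul_left, Pi.one_apply,
          one_mul]
    _ = (∫⁻ ω, E.indicator 1 ω ∂μ) * ∫⁻ ω, g ω ∂μ :=
        ProbabilityTheory.lintegral_mul_eq_lintegral_mul_lintegral_of_independent_measurableSpace
          hm' hm hindep hE_one hg
    _ = μ E * ∫⁻ ω, g ω ∂μ := by rw [lintegral_indicator_one (hm' _ hE)]

variable {Ω κ : Type*} {m m0 : MeasurableSpace Ω} {μ : Measure Ω}
  [MeasurableSpace κ] [MeasurableSingletonClass κ] [Countable κ] {K : Ω → κ}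

theorem lintegral_eq_tsum_setLIntegral_fiber (hK : Measurable K) (g : Ω → ℝ≥0∞) :
    ∫⁻ ω, g ω ∂μ = ∑' k, ∫⁻ ω in K ⁻¹' {k}, g ω ∂μ := by
  rw [← lintegral_iUnion (fun k ↦ hK (measurableSet_singleton k)) (pairwise_disjoint_fiber K),
    ← Set.preimage_iUnion, Set.iUnion_of_singleton, Set.preimage_univ, setLIntegral_univ]

theorem lintegral_comp_le_of_indep [IsProbabilityMeasure μ] (hK : Measurable K) (hm : m ≤ m0)
    (hindep : ProbabilityTheory.Indep (MeasurableSpace.comap K inferInstance) m μ)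
    {g : κ → Ω → ℝ≥0∞} (hg : ∀ k, μ (K ⁻¹' {k}) ≠ 0 → Measurable[m] (g k))
    {c : ℝ≥0∞} (hgc : ∀ k, μ (K ⁻¹' {k}) ≠ 0 → ∫⁻ ω, g k ω ∂μ ≤ c) :
    ∫⁻ ω, g (K ω) ω ∂μ ≤ c := by
  have hfiber (k : κ) : MeasurableSet (K ⁻¹' {k}) := hK (measurableSet_singleton k)
  have hfiber_le (k : κ) : ∫⁻ ω in K ⁻¹' {k}, g (K ω) ω ∂μ ≤ μ (K ⁻¹' {k}) * c := by
    rcases eq_or_ne (μ (K ⁻¹' {k})) 0 with hk | hk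
    · simp [setLIntegral_measure_zero _ _ hk]
    · calc ∫⁻ ω in K ⁻¹' {k}, g (K ω) ω ∂μ
          = ∫⁻ ω in K ⁻¹' {k}, g k ω ∂μ :=
            setLIntegral_congr_fun (hfiber k) fun ω hω ↦ congrArg (g · ω) hω
        _ = μ (K ⁻¹' {k}) * ∫⁻ ω, g k ω ∂μ :=
            setLIntegral_eq_mul_of_indep hK.comap_le hm hindep
              ⟨{k}, measurableSet_singleton k, rfl⟩ (hg k hk)
        _ ≤ μ (K ⁻¹' {k}) * c := by gcongr; exact hgc k hk
  calc ∫⁻ ω, g (K ω) ω ∂μ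
      = ∑' k, ∫⁻ ω in K ⁻¹' {k}, g (K ω) ω ∂μ := lintegral_eq_tsum_setLIntegral_fiber hK _
    _ ≤ ∑' k, μ (K ⁻¹' {k}) * c := ENNReal.tsum_le_tsum hfiber_le
    _ = c := by
      have hone : ∑' k, μ (K ⁻¹' {k}) = 1 := by
        simpa using (lintegral_eq_tsum_setLIntegral_fiber (μ := μ) hK 1).symm
      rw [ENNReal.tsum_mul_right, hone, one_mul]

theorem integral_comp_le_of_indep [IsProbabilityMeasure μ] (hK : Measurable K) (hm : m ≤ m0)
    (hindep : ProbabilityTheory.Indep (MeasurableSpace.comap K inferInstance) m μ)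
    {g : κ → Ω → ℝ} (hg_nonneg : ∀ k, 0 ≤ g k)
    (hg_meas : ∀ k, μ (K ⁻¹' {k}) ≠ 0 → Measurable[m] (g k))
    (hg_int : ∀ k, μ (K ⁻¹' {k}) ≠ 0 → Integrable (g k) μ)
    {c : ℝ} (hc : 0 ≤ c) (hgc : ∀ k, μ (K ⁻¹' {k}) ≠ 0 → ∫ ω, g k ω ∂μ ≤ c) :
    ∫ ω, g (K ω) ω ∂μ ≤ c := by
  have hlintegral : ∫⁻ ω, ENNReal.ofReal (g (K ω) ω) ∂μ ≤ ENNReal.ofReal c := by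
    refine lintegral_comp_le_of_indep (g := fun k ω ↦ ENNReal.ofReal (g k ω)) hK hm hindep
      (fun k hk ↦ (hg_meas k hk).ennreal_ofReal) fun k hk ↦ ?_
    rw [← ofReal_integral_eq_lintegral_ofReal (hg_int k hk) (.of_forall (hg_nonneg k))]
    exact ENNReal.ofReal_le_ofReal (hgc k hk)
  calc ∫ ω, g (K ω) ω ∂μ
      ≤ (∫⁻ ω, ENNReal.ofReal ‖g (K ω) ω‖ ∂μ).toReal :=
        (Real.le_norm_self _).trans (norm_integral_le_lintegral_norm _)
    _ = (∫⁻ ω, ENNReal.ofReal (g (K ω) ω) ∂μ).toReal := by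
        simp only [Real.norm_of_nonneg (hg_nonneg _ _)]
    _ ≤ c := ENNReal.toReal_le_of_le_ofReal hc hlintegral

end Conditioning

section ErrorRate

variable {Ω κ ι : Type*} {m m0 : MeasurableSpace Ω} {μ : Measure Ω}

/-- The fraction of the events `A i`, `i ∈ s`, that occur at `ω`; for the
rejection events of a family of true null hypotheses its mean is the per comparison error rate.
For empty `s` it takes the junk value `0`. -/
noncomputable def occurrenceRate (s : Finset ι) (A : ι → Set Ω) (ω : Ω) : ℝ :=
  (∑ i ∈ s, (A i).indicator 1 ω) / s.card

theorem occurrenceRate_nonneg (s : Finset ι) (A : ι → Set Ω) : 0 ≤ occurrenceRate s A :=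
  fun ω ↦ div_nonneg (Finset.sum_nonneg fun _ _ ↦ Set.indicator_nonneg (fun _ _ ↦ zero_le_one) ω)
    (Nat.cast_nonneg _)

theorem measurable_occurrenceRate {s : Finset ι} {A : ι → Set Ω}
    (hA : ∀ i ∈ s, MeasurableSet (A i)) : Measurable (occurrenceRate s A) :=
  (Finset.measurable_fun_sum s fun i hi ↦ measurable_one.indicator (hA i hi)).div_const _

theorem integrable_occurrenceRate [IsFiniteMeasure μ] {s : Finset ι} {A : ι → Set Ω}
    (hA : ∀ i ∈ s, MeasurableSet (A i)) : Integrable (occurrenceRate s A) μ :=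
  (integrable_finsetSum s fun i hi ↦ (integrable_const 1).indicator (hA i hi)).div_const _

theorem integral_occurrenceRate_le [IsFiniteMeasure μ] {s : Finset ι} (hs : s.Nonempty)
    {A : ι → Set Ω} (hA : ∀ i ∈ s, MeasurableSet (A i)) {c : ℝ}
    (hAc : ∀ i ∈ s, μ.real (A i) ≤ c) :
    ∫ ω, occurrenceRate s A ω ∂μ ≤ c := by
  have hintegral : ∫ ω, occurrenceRate s A ω ∂μ = (∑ i ∈ s, μ.real (A i)) / s.card := by
    simp only [occurrenceRate]
    rw [integral_div, integral_finsetSum s fun i hi ↦ (integrable_const 1).indicator (hA i hi)]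
    congr 1
    exact Finset.sum_congr rfl fun i hi ↦ integral_indicator_one (hA i hi)
  rw [hintegral, div_le_iff₀ (mod_cast hs.card_pos), mul_comm, ← nsmul_eq_mul]
  exact Finset.sum_le_card_nsmul s _ c hAc

theorem integral_occurrenceRate_comp_le_of_indep [IsProbabilityMeasure μ]
    [MeasurableSpace κ] [MeasurableSingletonClass κ] [Countable κ] {K : Ω → κ}
    (hK : Measurable K) (hm : m ≤ m0)
    (hindep : ProbabilityTheory.Indep (MeasurableSpace.comap K inferInstance) m μ)
    {s : κ → Finset ι} (hs : ∀ k, μ (K ⁻¹' {k}) ≠ 0 → (s k).Nonempty) {A : κ → ι → Set Ω}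
    (hA : ∀ k, μ (K ⁻¹' {k}) ≠ 0 → ∀ i ∈ s k, MeasurableSet[m] (A k i))
    {c : ℝ} (hc : 0 ≤ c) (hAc : ∀ k, μ (K ⁻¹' {k}) ≠ 0 → ∀ i ∈ s k, μ.real (A k i) ≤ c) :
    ∫ ω, occurrenceRate (s (K ω)) (A (K ω)) ω ∂μ ≤ c :=
  have hA0 k hk i hi : MeasurableSet (A k i) := hm _ (hA k hk i hi)
  integral_comp_le_of_indep (g := fun k ↦ occurrenceRate (s k) (A k)) hK hm hindep
    (fun _ ↦ occurrenceRate_nonneg _ _) (fun k hk ↦ measurable_occurrenceRate (hA k hk))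
    (fun k hk ↦ integrable_occurrenceRate (hA0 k hk)) hc
    fun k hk ↦ integral_occurrenceRate_le (hs k hk) (hA0 k hk) (hAc k hk)

end ErrorRate

theorem apply_le_apply_of_forall_lt {ι β : Type*} [PartialOrder ι] [Preorder β] {t : ι → β} {n : ι}
    (ht : ∀ i j, i < j → j ≤ n → t i < t j) {i : ι} (hi : i ≤ n) : t i ≤ t n :=
  hi.eq_or_lt.elim (fun h ↦ (congrArg t h).le) fun h ↦ (ht i n h le_rfl).le

open Classical in
theorem stmt13_general {Ω : Type*} {m0 : MeasurableSpace Ω}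
    (μ : Measure Ω) [IsProbabilityMeasure μ] (ℱ : Filtration ℕ m0) (T : ℕ)
    (N0 : Ω → ℕ) (hN0meas : Measurable N0) (hN0pos : ∀ ω, 1 ≤ N0 ω)
    (hIndep : ProbabilityTheory.Indep (MeasurableSpace.comap N0 ⊤) (ℱ T) μ)
    (l u : ℕ → ℕ → ℕ) (hu : ∀ ω i, 1 ≤ i → i ≤ N0 ω → u (N0 ω) i ≤ T)
    (M : ℕ → ℕ → ℕ → Ω → ℝ)
    (hblock : ∀ n, μ (N0 ⁻¹' {n}) ≠ 0 → ∀ i, 1 ≤ i → i ≤ n →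
      (∀ s, l n i < s → s ≤ u n i →
        StronglyMeasurable[ℱ s] (M n i s) ∧ Integrable (M n i s) μ ∧ 0 ≤ᵐ[μ] M n i s) ∧
      (μ[M n i (l n i + 1) | ℱ (l n i)] ≤ᵐ[μ] fun _ ↦ 1) ∧
      (∀ s, l n i < s → s + 1 ≤ u n i → μ[M n i (s + 1) | ℱ s] ≤ᵐ[μ] M n i s))
    (α : ℝ) (hα : 0 < α) :
    ∫ ω, (∑ i ∈ Finset.Icc 1 (N0 ω),
        if ∃ s, l (N0 ω) i < s ∧ s ≤ u (N0 ω) i ∧ 1 / α ≤ M (N0 ω) i s ω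
        then (1 : ℝ) else 0) / (N0 ω : ℝ) ∂μ ≤ α := by
  let reject (n i : ℕ) : Set Ω := blockCrossing (M n i) (l n i) (u n i) (1 / α)
  have hM n (hn : μ (N0 ⁻¹' {n}) ≠ 0) i (hi : i ∈ Finset.Icc 1 n) :
      IsRestartedSupermartingaleOn (M n i) ℱ μ (l n i) (u n i) := by
    obtain ⟨hproc, hstart, hstep⟩ :=
      hblock n hn i (Finset.mem_Icc.1 hi).1 (Finset.mem_Icc.1 hi).2
    exact ⟨fun s h₁ h₂ ↦ (hproc s h₁ h₂).1, fun s h₁ h₂ ↦ (hproc s h₁ h₂).2.1,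
      fun s h₁ h₂ ↦ (hproc s h₁ h₂).2.2, fun _ ↦ hstart, hstep⟩
  have hreject_meas n (hn : μ (N0 ⁻¹' {n}) ≠ 0) i (hi : i ∈ Finset.Icc 1 n) :
      MeasurableSet[ℱ T] (reject n i) := by
    have huT : u n i ≤ T := by
      obtain ⟨ω, rfl⟩ := nonempty_of_measure_ne_zero hn
      exact hu ω i (Finset.mem_Icc.1 hi).1 (Finset.mem_Icc.1 hi).2
    exact ℱ.mono huT _ ((hM n hn i hi).measurableSet_blockCrossing _)
  have hIcc n (hn : μ (N0 ⁻¹' {n}) ≠ 0) : (Finset.Icc 1 n).Nonempty := by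
    obtain ⟨ω, rfl⟩ := nonempty_of_measure_ne_zero hn
    exact Finset.nonempty_Icc.2 (hN0pos ω)
  have hrate : ∫ ω, occurrenceRate (Finset.Icc 1 (N0 ω)) (reject (N0 ω)) ω ∂μ ≤ α :=
    integral_occurrenceRate_comp_le_of_indep hN0meas (ℱ.le T) hIndep hIcc hreject_meas hα.le
      fun n hn i hi ↦ (hM n hn i hi).measureReal_blockCrossing_le hα
  simpa only [occurrenceRate, reject, blockCrossing, Set.indicator_apply, Set.mem_ofPred_eq,
    Pi.one_apply, Nat.card_Icc, Nat.add_sub_cancel] using hrate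

open Classical in
/-- PCER control with restarts at prespecified time points:
with a random number of blocks `N₀` independent of `ℱ_T`, prespecified
partitions `0 = t₀⁽ⁿ⁾ < ⋯ < tₙ⁽ⁿ⁾ = T`, and a restarted e-process `M̃ʳᵉ` whose
block processes (prepended with the value 1) are nonnegative supermartingales,
the per comparison error rate at threshold `1/α` is at most `α`. -/
theorem stmt13 {Ω : Type*} {m0 : MeasurableSpace Ω}
    (μ : Measure Ω) [IsProbabilityMeasure μ]
    (ℱ : Filtration ℕ m0) (T : ℕ)
    (N0 : Ω → ℕ) (hN0meas : Measurable N0)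
    (hN0range : ∀ ω, 1 ≤ N0 ω ∧ N0 ω ≤ T)
    -- `N₀` is independent of `ℱ_T`
    (hIndep : ProbabilityTheory.Indep
      (MeasurableSpace.comap N0 ⊤) (ℱ T) μ)
    -- prespecified partitions `t₀⁽ⁿ⁾ = 0 < t₁⁽ⁿ⁾ < ⋯ < tₙ⁽ⁿ⁾ = T`
    (tp : ℕ → ℕ → ℕ)
    (htp0 : ∀ n, tp n 0 = 0)
    (htpT : ∀ n, 1 ≤ n → n ≤ T → tp n n = T)
    (htpmono : ∀ n i j, i < j → j ≤ n → tp n i < tp n j)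
    (Mre : ℕ → Ω → ℝ)
    -- each restarted block, prepended with the value 1, is a nonnegative
    -- supermartingale (for each `n` in the support of `N₀` and each block `i`)
    (hblock : ∀ n, μ (N0 ⁻¹' {n}) ≠ 0 → ∀ i, 1 ≤ i → i ≤ n →
      (∀ s, tp n (i - 1) < s → s ≤ tp n i →
        StronglyMeasurable[ℱ s] (Mre s) ∧ Integrable (Mre s) μ ∧ 0 ≤ᵐ[μ] Mre s) ∧
      (μ[Mre (tp n (i - 1) + 1) | ℱ (tp n (i - 1))] ≤ᵐ[μ] fun _ => 1) ∧
      (∀ s, tp n (i - 1) < s → s + 1 ≤ tp n i →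
        μ[Mre (s + 1) | ℱ s] ≤ᵐ[μ] Mre s))
    (α : ℝ) (hα : α ∈ Set.Ioo (0:ℝ) 1) :
    -- PCER control: `E[ (1/N₀) Σᵢ 1{block i rejects} ] ≤ α`
    ∫ ω, (∑ i ∈ Finset.Icc 1 (N0 ω),
        if ∃ s, tp (N0 ω) (i - 1) < s ∧ s ≤ tp (N0 ω) i ∧ 1 / α ≤ Mre s ω
        then (1:ℝ) else 0) / (N0 ω : ℝ) ∂μ ≤ α :=
  stmt13_general μ ℱ T N0 hN0meas (fun ω ↦ (hN0range ω).1) hIndep (fun n i ↦ tp n (i - 1)) tp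
    (fun ω _ _ hi ↦ (apply_le_apply_of_forall_lt (htpmono (N0 ω)) hi).trans_eq
      (htpT _ (hN0range ω).1 (hN0range ω).2))
    (fun _ _ ↦ Mre) hblock α hα.1
end

section
/- Let L be an integrable real-valued random variable with distribution function F, let p∈(0,1), and define VaR⁻_p(L) = inf{x : F(x) ≥ p}, VaR⁺_p(L) = inf{x : F(x) > p}, and the Expected Shortfall ES_p(L) = (1/(1−p)) ∫_p^1 VaR⁻_u(L) du. Then for every z ∈ [VaR⁻_p(L), VaR⁺_p(L)] one has E[(L−z)_+] = (1−p)(ES_p(L) − z). Consequently, for every r ≥ ES_p(L) with r > z, E[ (L−z)_+ / ((1−p)(r−z)) ] ≤ 1, with equality if and only if r = ES_p(L); and for every r with z < r < ES_p(L), E[ (L−z)_+ / ((1−p)(r−z)) ] > 1. Hence (L−z)_+/((1−p)(r−z)) is a precise e-variable for the hypothesis H: r ≥ ES_p(L) and z ∈ [VaR⁻_p(L), VaR⁺_p(L)], over all integrable L. -/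
open MeasureTheory

/-!
The left quantile function `q` of a probability law `ν` satisfies the Galois relation
`q u ≤ x ↔ u ≤ F x` on `(0, 1)`, so it pushes the uniform law on `(0, 1)` forward to `ν`, and
`E[(L - z)₊] = ∫₀¹ (q u - z)₊ du`. When `z` lies between the left and the right `p`-quantile, `z`
separates the values of `q` on `(0, p]` from those on `(p, 1)`, so the positive part can be replaced
by restricting the integral to `(p, 1)`, where it becomes `(1 - p) (ES_p - z)`.
-/

section Quantile

open Set ProbabilityTheory

/-- The left `u`-quantile `VaR⁻_u` of a law on `ℝ`, meant for probability measures and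
`u ∈ (0, 1)`; outside this range the set may be empty or unbounded below, and the value is junk. -/
noncomputable def leftQuantile (ν : Measure ℝ) (u : ℝ) : ℝ :=
  sInf {x | u ≤ cdf ν x}

/-- The right `u`-quantile `VaR⁺_u` of a law on `ℝ`, with the same conventions as
`leftQuantile`. -/
noncomputable def rightQuantile (ν : Measure ℝ) (u : ℝ) : ℝ :=
  sInf {x | u < cdf ν x}

/-- The Expected Shortfall `ES_p` of a law on `ℝ`, the average of its left quantiles over the levels
in `(p, 1)`; it is meaningful when the upper tail of the law is integrable. -/
noncomputable def expectedShortfall (ν : Measure ℝ) (p : ℝ) : ℝ :=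
  1 / (1 - p) * ∫ u in p..1, leftQuantile ν u

variable {ν : Measure ℝ} {p u x z : ℝ}

lemma nonempty_setOf_le_cdf (ν : Measure ℝ) (hu : u < 1) : {x | u ≤ cdf ν x}.Nonempty :=
  ((tendsto_cdf_atTop ν).eventually_const_le hu).exists

lemma bddBelow_setOf_le_cdf (ν : Measure ℝ) (hu : 0 < u) : BddBelow {x | u ≤ cdf ν x} := by
  obtain ⟨y, hy⟩ := ((tendsto_cdf_atBot ν).eventually_lt_const hu).exists
  exact ⟨y, fun _ hw => ((monotone_cdf ν).reflect_lt (hy.trans_le hw)).le⟩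

lemma le_cdf_leftQuantile (ν : Measure ℝ) (hu : u < 1) : u ≤ cdf ν (leftQuantile ν u) := by
  have hright : Filter.Tendsto (cdf ν) (nhdsWithin (leftQuantile ν u) (Ioi (leftQuantile ν u)))
      (nhds (cdf ν (leftQuantile ν u))) :=
    ((cdf ν).right_continuous _).mono_left (nhdsWithin_mono _ Ioi_subset_Ici_self)
  refine ge_of_tendsto hright ?_
  filter_upwards [self_mem_nhdsWithin] with y hy
  obtain ⟨w, hw, hwy⟩ := exists_lt_of_csInf_lt (nonempty_setOf_le_cdf ν hu) hy
  exact hw.trans (monotone_cdf ν hwy.le)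

lemma leftQuantile_le_iff (hu : u ∈ Ioo 0 1) : leftQuantile ν u ≤ x ↔ u ≤ cdf ν x :=
  ⟨fun h => (le_cdf_leftQuantile ν hu.2).trans (monotone_cdf ν h),
    fun h => csInf_le (bddBelow_setOf_le_cdf ν hu.1) h⟩

lemma monotoneOn_leftQuantile (ν : Measure ℝ) : MonotoneOn (leftQuantile ν) (Ioo 0 1) :=
  fun _ ha _ hb hab => (leftQuantile_le_iff ha).2 (hab.trans (le_cdf_leftQuantile ν hb.2))

lemma rightQuantile_le_leftQuantile (hp : 0 < p) (hpu : p < u) (hu : u < 1) :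
    rightQuantile ν p ≤ leftQuantile ν u :=
  csInf_le ((bddBelow_setOf_le_cdf ν hp).mono (ofPred_subset_ofPred.2 fun _ => le_of_lt))
    (hpu.trans_le (le_cdf_leftQuantile ν hu))

lemma aemeasurable_leftQuantile (ν : Measure ℝ) :
    AEMeasurable (leftQuantile ν) (volume.restrict (Ioo 0 1)) :=
  aemeasurable_restrict_of_monotoneOn measurableSet_Ioo (monotoneOn_leftQuantile ν)

lemma map_leftQuantile_volume (ν : Measure ℝ) [IsProbabilityMeasure ν] :
    (volume.restrict (Ioo 0 1)).map (leftQuantile ν) = ν := by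
  refine (Measure.ext_of_Iic _ _ fun x => ?_).symm
  have hpreimage : leftQuantile ν ⁻¹' Iic x =ᵐ[volume.restrict (Ioo 0 1)] Iic (cdf ν x) := by
    filter_upwards [ae_restrict_mem measurableSet_Ioo] with u hu
    exact propext (leftQuantile_le_iff hu)
  calc ν (Iic x) = volume (Ioc 0 (cdf ν x)) := by rw [Real.volume_Ioc, sub_zero, ofReal_cdf]
    _ = volume.restrict (Ioo 0 1) (Iic (cdf ν x)) := by
      rw [restrict_Ioo_eq_restrict_Ioc, Measure.restrict_apply measurableSet_Iic, inter_comm,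
        Ioc_inter_Iic, min_eq_right (cdf_le_one ν x)]
    _ = (volume.restrict (Ioo 0 1)).map (leftQuantile ν) (Iic x) := by
      rw [Measure.map_apply_of_aemeasurable (aemeasurable_leftQuantile ν) measurableSet_Iic,
        measure_congr hpreimage]

lemma max_leftQuantile_sub_zero (hp : p ∈ Ioo 0 1)
    (hz : z ∈ Icc (leftQuantile ν p) (rightQuantile ν p)) (hu : u ∈ Ioo 0 1) :
    max (leftQuantile ν u - z) 0 = (Ioi p).indicator (fun v => leftQuantile ν v - z) u := by
  rcases le_or_gt u p with hup | hpu
  · rw [indicator_of_notMem (notMem_Ioi.2 hup)]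
    exact max_eq_right (sub_nonpos.2 ((monotoneOn_leftQuantile ν hu hp hup).trans hz.1))
  · rw [indicator_of_mem (mem_Ioi.2 hpu)]
    exact max_eq_left (sub_nonneg.2 (hz.2.trans (rightQuantile_le_leftQuantile hp.1 hpu hu.2)))

lemma integral_max_sub_zero_eq_intervalIntegral [IsProbabilityMeasure ν] (hp : p ∈ Ioo 0 1)
    (hz : z ∈ Icc (leftQuantile ν p) (rightQuantile ν p)) :
    ∫ x, max (x - z) 0 ∂ν = ∫ u in p..1, (leftQuantile ν u - z) := by
  calc ∫ x, max (x - z) 0 ∂ν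
      = ∫ x, max (x - z) 0 ∂(volume.restrict (Ioo 0 1)).map (leftQuantile ν) := by
        rw [map_leftQuantile_volume]
    _ = ∫ u in Ioo 0 1, max (leftQuantile ν u - z) 0 :=
        integral_map (aemeasurable_leftQuantile ν) (by fun_prop)
    _ = ∫ u in Ioo 0 1, (Ioi p).indicator (fun v => leftQuantile ν v - z) u :=
        setIntegral_congr_fun measurableSet_Ioo fun _ hu => max_leftQuantile_sub_zero hp hz hu
    _ = ∫ u in p..1, (leftQuantile ν u - z) := by
        rw [setIntegral_indicator measurableSet_Ioi, Ioo_inter_Ioi, max_eq_right hp.1.le,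
          intervalIntegral.integral_of_le hp.2.le, integral_Ioc_eq_integral_Ioo]

lemma intervalIntegrable_leftQuantile [IsProbabilityMeasure ν] (hp : p ∈ Ioo 0 1)
    (hz : z ∈ Icc (leftQuantile ν p) (rightQuantile ν p))
    (htail : Integrable (fun x => max (x - z) 0) ν) :
    IntervalIntegrable (leftQuantile ν) volume p 1 := by
  have hmax : IntegrableOn (fun u => max (leftQuantile ν u - z) 0) (Ioo 0 1) := by
    rw [← map_leftQuantile_volume ν] at htail
    exact htail.comp_aemeasurable (aemeasurable_leftQuantile ν)
  have hsub : IntegrableOn (fun u => leftQuantile ν u - z) (Ioo p 1) := by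
    refine (hmax.mono_set (Ioo_subset_Ioo_left hp.1.le)).congr_fun (fun u hu => ?_)
      measurableSet_Ioo
    simpa only [indicator_of_mem (mem_Ioi.2 hu.1)] using
      max_leftQuantile_sub_zero hp hz ⟨hp.1.trans hu.1, hu.2⟩
  rw [intervalIntegrable_iff_integrableOn_Ioo_of_le hp.2.le]
  simpa only [Pi.add_def, sub_add_cancel] using! hsub.add (integrable_const z)

theorem integral_max_sub_zero_eq_expectedShortfall [IsProbabilityMeasure ν] (hp : p ∈ Ioo 0 1)
    (hz : z ∈ Icc (leftQuantile ν p) (rightQuantile ν p))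
    (htail : Integrable (fun x => max (x - z) 0) ν) :
    ∫ x, max (x - z) 0 ∂ν = (1 - p) * (expectedShortfall ν p - z) := by
  have hp1 : 1 - p ≠ 0 := sub_ne_zero.2 hp.2.ne'
  rw [integral_max_sub_zero_eq_intervalIntegral hp hz,
    intervalIntegral.integral_sub (intervalIntegrable_leftQuantile hp hz htail)
      intervalIntegrable_const,
    intervalIntegral.integral_const, smul_eq_mul, expectedShortfall, mul_sub, ← mul_assoc,
    mul_one_div_cancel hp1, one_mul]

end Quantile

section RandomVariable

variable {Ω : Type*} {m0 : MeasurableSpace Ω} {μ : Measure Ω} {L : Ω → ℝ}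

lemma integrable_max_sub_zero [IsFiniteMeasure μ] (hL : AEMeasurable L μ)
    (hpos : Integrable (fun ω => max (L ω) 0) μ) (z : ℝ) :
    Integrable (fun ω => max (L ω - z) 0) μ := by
  refine (hpos.add (integrable_const |z|)).mono' (by fun_prop) (.of_forall fun ω => ?_)
  rw [Real.norm_of_nonneg (le_max_right _ _)]
  refine max_le ?_ (add_nonneg (le_max_right _ _) (abs_nonneg z))
  rw [sub_eq_add_neg]
  exact add_le_add (le_max_left _ _) (neg_le_abs z)

lemma toReal_measure_setOf_le_eq_cdf [IsProbabilityMeasure μ] (hL : AEMeasurable L μ) (x : ℝ) :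
    (μ {ω | L ω ≤ x}).toReal = ProbabilityTheory.cdf (μ.map L) x := by
  have := Measure.isProbabilityMeasure_map hL
  rw [ProbabilityTheory.cdf_eq_real, measureReal_def,
    Measure.map_apply_of_aemeasurable hL measurableSet_Iic]
  rfl

lemma integral_max_sub_zero_eq_expectedShortfall_map [IsProbabilityMeasure μ]
    (hL : AEMeasurable L μ) (hpos : Integrable (fun ω => max (L ω) 0) μ) {p z : ℝ}
    (hp : p ∈ Set.Ioo 0 1)
    (hz : z ∈ Set.Icc (leftQuantile (μ.map L) p) (rightQuantile (μ.map L) p)) :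
    ∫ ω, max (L ω - z) 0 ∂μ = (1 - p) * (expectedShortfall (μ.map L) p - z) := by
  have := Measure.isProbabilityMeasure_map hL
  have hmeas : AEStronglyMeasurable (fun x : ℝ => max (x - z) 0) (μ.map L) := by fun_prop
  rw [← integral_max_sub_zero_eq_expectedShortfall hp hz
    ((integrable_map_measure hmeas hL).2 (integrable_max_sub_zero hL hpos z)),
    integral_map hL hmeas]

lemma integral_max_sub_zero_div {p es z : ℝ} (hp : p < 1)
    (hes : ∫ ω, max (L ω - z) 0 ∂μ = (1 - p) * (es - z)) (r : ℝ) :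
    ∫ ω, max (L ω - z) 0 / ((1 - p) * (r - z)) ∂μ = (es - z) / (r - z) := by
  rw [integral_div, hes, mul_div_mul_left _ _ (sub_pos.2 hp).ne']

end RandomVariable

theorem stmt19_general {Ω : Type*} {m0 : MeasurableSpace Ω}
    (μ : Measure Ω) [IsProbabilityMeasure μ]
    (L : Ω → ℝ) (hL : AEMeasurable L μ)
    (hpos : Integrable (fun ω => max (L ω) 0) μ)
    (p : ℝ) (hp : p ∈ Set.Ioo (0 : ℝ) 1)
    (varm : ℝ → ℝ)
    (hvarm : ∀ u : ℝ, varm u = sInf {x : ℝ | u ≤ (μ {ω | L ω ≤ x}).toReal})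
    (varp : ℝ)
    (hvarp : varp = sInf {x : ℝ | p < (μ {ω | L ω ≤ x}).toReal})
    (es : ℝ)
    (hes : es = (1 / (1 - p)) * ∫ u in p..1, varm u) :
    ∀ z ∈ Set.Icc (varm p) varp,
      (∫ ω, max (L ω - z) 0 ∂μ) = (1 - p) * (es - z) ∧
      (∀ r : ℝ, es ≤ r → z < r →
        (∫ ω, max (L ω - z) 0 / ((1 - p) * (r - z)) ∂μ) ≤ 1 ∧
        ((∫ ω, max (L ω - z) 0 / ((1 - p) * (r - z)) ∂μ) = 1 ↔ r = es)) ∧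
      (∀ r : ℝ, z < r → r < es →
        1 < ∫ ω, max (L ω - z) 0 / ((1 - p) * (r - z)) ∂μ) := by
  obtain rfl : varm = leftQuantile (μ.map L) := funext fun u => by
    simp only [hvarm, leftQuantile, toReal_measure_setOf_le_eq_cdf hL]
  obtain rfl : varp = rightQuantile (μ.map L) p := by
    simp only [hvarp, rightQuantile, toReal_measure_setOf_le_eq_cdf hL]
  obtain rfl : es = expectedShortfall (μ.map L) p := hes
  intro z hz
  have hmean := integral_max_sub_zero_eq_expectedShortfall_map hL hpos hp hz
  refine ⟨hmean, fun r her hzr => ?_, fun r hzr hre => ?_⟩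
  · rw [integral_max_sub_zero_div hp.2 hmean, div_le_one (sub_pos.2 hzr),
      div_eq_one_iff_eq (sub_pos.2 hzr).ne', sub_left_inj, sub_le_sub_iff_right]
    exact ⟨her, eq_comm⟩
  · rw [integral_max_sub_zero_div hp.2 hmean, one_lt_div (sub_pos.2 hzr)]
    exact sub_lt_sub_right hre z

/-- for an integrable random variable `L`, `p ∈ (0,1)`,
`VaR⁻_p`, `VaR⁺_p` the lower/upper quantiles and
`ES_p(L) = (1/(1−p)) ∫_p^1 VaR⁻_u(L) du`: for every
`z ∈ [VaR⁻_p(L), VaR⁺_p(L)]`, `E[(L−z)_+] = (1−p)(ES_p(L) − z)`; consequently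
for `r ≥ ES_p(L)` with `r > z`, `E[(L−z)_+/((1−p)(r−z))] ≤ 1` with equality iff
`r = ES_p(L)`, and for `z < r < ES_p(L)`, `E[(L−z)_+/((1−p)(r−z))] > 1`; hence
`(L−z)_+/((1−p)(r−z))` is a precise e-variable for `H : r ≥ ES_p(L)` and
`z ∈ [VaR⁻_p(L), VaR⁺_p(L)]`. -/
theorem stmt19 {Ω : Type*} {m0 : MeasurableSpace Ω}
    (μ : Measure Ω) [IsProbabilityMeasure μ]
    (L : Ω → ℝ) (hL : Measurable L) (hint : Integrable L μ)
    (p : ℝ) (hp : p ∈ Set.Ioo (0:ℝ) 1)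
    -- `VaR⁻_u(L) = inf{x : F(x) ≥ u}`
    (varm : ℝ → ℝ)
    (hvarm : ∀ u : ℝ, varm u = sInf {x : ℝ | u ≤ (μ {ω | L ω ≤ x}).toReal})
    -- `VaR⁺_p(L) = inf{x : F(x) > p}`
    (varp : ℝ)
    (hvarp : varp = sInf {x : ℝ | p < (μ {ω | L ω ≤ x}).toReal})
    -- `ES_p(L) = (1/(1−p)) ∫_p^1 VaR⁻_u(L) du`
    (es : ℝ)
    (hes : es = (1 / (1 - p)) * ∫ u in p..1, varm u) :
    ∀ z ∈ Set.Icc (varm p) varp,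
      -- `E[(L−z)_+] = (1−p)(ES_p(L) − z)`
      (∫ ω, max (L ω - z) 0 ∂μ) = (1 - p) * (es - z) ∧
      -- e-variable property with equality iff `r = ES_p(L)`
      (∀ r : ℝ, es ≤ r → z < r →
        (∫ ω, max (L ω - z) 0 / ((1 - p) * (r - z)) ∂μ) ≤ 1 ∧
        ((∫ ω, max (L ω - z) 0 / ((1 - p) * (r - z)) ∂μ) = 1 ↔ r = es)) ∧
      -- consistency under underestimation of `ES_p`
      (∀ r : ℝ, z < r → r < es →
        1 < ∫ ω, max (L ω - z) 0 / ((1 - p) * (r - z)) ∂μ) := by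
  exact stmt19_general μ L hL.aemeasurable hint.pos_part p hp varm hvarm varp hvarp es hes
end
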